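/- Let N : ℝ → ℝ be Lebesgue integrable, let α ∈ ℝ and δ > 0, and suppose N is continuously differentiable on the open interval (α − δ, α + δ) with sup_{x ∈ (α−δ, α+δ)} |N′(x)| < ∞. Then ∫_ℝ η²·(z − α)·N(z) / ((z − α)² + η²)² dz tends to 0 as η → 0⁺. -/

import Mathlib

open MeasureTheory

lemma kernel_odd (α δ c η : ℝ) :
    ∫ z : ℝ, η ^ 2 * (z - α) * ((Set.Ioo (α - δ) (α + δ)).indicator (fun _ => c) z)
      / ((z - α) ^ 2 + η ^ 2) ^ 2 = 0 := by
  set f : ℝ → ℝ := fun z => η ^ 2 * (z - α) * ((Set.Ioo (α - δ) (α + δ)).indicator (fun _ => c) z)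
      / ((z - α) ^ 2 + η ^ 2) ^ 2 with hf
  have h1 : ∫ z, f (2 * α - z) = ∫ z, f z := integral_sub_left_eq_self f volume (2 * α)
  have h2 : ∀ z, f (2 * α - z) = - f z := by
    intro z
    have e : (Set.Ioo (α - δ) (α + δ)).indicator (fun _ => c) (2 * α - z)
        = (Set.Ioo (α - δ) (α + δ)).indicator (fun _ => c) z := by
      by_cases hz : z ∈ Set.Ioo (α - δ) (α + δ)
      · rw [Set.indicator_of_mem hz, Set.indicator_of_mem]
        constructor <;> linarith [hz.1, hz.2]
      · rw [Set.indicator_of_notMem hz, Set.indicator_of_notMem]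
        intro h
        apply hz
        constructor <;> linarith [h.1, h.2]
    simp only [hf, e]
    have e2 : 2 * α - z - α = -(z - α) := by ring
    rw [e2, neg_sq]
    ring
  simp only [h2, integral_neg] at h1
  linarith

theorem statement16 (N : ℝ → ℝ) (hN : Integrable N) (α δ : ℝ) (hδ : 0 < δ)
    (hsmooth : ContDiffOn ℝ 1 N (Set.Ioo (α - δ) (α + δ)))
    (hbdd : ∃ C : ℝ, ∀ x ∈ Set.Ioo (α - δ) (α + δ), |deriv N x| ≤ C) :
    Filter.Tendsto
      (fun η : ℝ => ∫ z : ℝ, η ^ 2 * (z - α) * N z / ((z - α) ^ 2 + η ^ 2) ^ 2)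
      (nhdsWithin 0 (Set.Ioi 0)) (nhds 0) := by
  obtain ⟨C, hC⟩ := hbdd
  set I := Set.Ioo (α - δ) (α + δ) with hI
  have hα : α ∈ I := ⟨by linarith, by linarith⟩
  have hC0 : 0 ≤ C := (abs_nonneg _).trans (hC α hα)
  have hlip : ∀ z ∈ I, |N z - N α| ≤ C * |z - α| := by
    intro z hz
    have := Convex.norm_image_sub_le_of_norm_deriv_le (f := N) (s := I) (C := C)
      (fun x hx => ((hsmooth.differentiableOn (by norm_num)).differentiableAt
        (isOpen_Ioo.mem_nhds hx))) (fun x hx => by simpa using hC x hx) (convex_Ioo _ _) hα hz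
    simpa using this
  set h : ℝ → ℝ := I.indicator (fun _ => N α) with hh
  have hhint : Integrable h := by
    rw [hh, integrable_indicator_iff measurableSet_Ioo]
    exact integrableOn_const (by simp [hI])
  set F : ℝ → ℝ → ℝ := fun η z => η ^ 2 * (z - α) * (N z - h z) / ((z - α) ^ 2 + η ^ 2) ^ 2 with hF
  set B : ℝ → ℝ := fun z => I.indicator (fun _ => C) z + |N z| / δ with hB
  have hBint : Integrable B := by
    refine Integrable.add ?_ (hN.abs.div_const δ)
    rw [integrable_indicator_iff measurableSet_Ioo]
    exact integrableOn_const (by simp [hI])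
  have hmeasK : ∀ η : ℝ, Measurable fun z : ℝ => η ^ 2 * (z - α) := fun η => by fun_prop
  have hmeasD : ∀ η : ℝ, Measurable fun z : ℝ => ((z - α) ^ 2 + η ^ 2) ^ 2 := fun η => by fun_prop
  have hFm : ∀ η, AEStronglyMeasurable (F η) volume := fun η =>
    (((hmeasK η).aemeasurable.mul (hN.sub hhint).aemeasurable).div
      (hmeasD η).aemeasurable).aestronglyMeasurable
  have hbound : ∀ η : ℝ, 0 < η → ∀ z, ‖F η z‖ ≤ B z := by
    intro η hη z
    have hD : 0 < ((z - α) ^ 2 + η ^ 2) ^ 2 := by positivity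
    have hkey : η ^ 2 * |z - α| * |z - α| ≤ ((z - α) ^ 2 + η ^ 2) ^ 2 := by
      rw [mul_assoc, abs_mul_abs_self]
      nlinarith [sq_nonneg ((z - α) ^ 2), sq_nonneg (η ^ 2), mul_nonneg (sq_nonneg η) (sq_nonneg (z - α))]
    have e : ‖F η z‖ = η ^ 2 * |z - α| * |N z - h z| / ((z - α) ^ 2 + η ^ 2) ^ 2 := by
      simp only [hF, Real.norm_eq_abs, abs_div, abs_mul, abs_of_pos hD, abs_of_pos (pow_pos hη 2)]
    rw [e, div_le_iff₀ hD]
    by_cases hz : z ∈ I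
    · simp only [hB, hh, Set.indicator_of_mem hz]
      have h1 : 0 ≤ |N z| / δ := by positivity
      calc _ ≤ η ^ 2 * |z - α| * (C * |z - α|) := by gcongr; exact hlip z hz
        _ = C * (η ^ 2 * |z - α| * |z - α|) := by ring
        _ ≤ C * ((z - α) ^ 2 + η ^ 2) ^ 2 := by gcongr
        _ ≤ _ := by gcongr; linarith
    · simp only [hB, hh, Set.indicator_of_notMem hz, sub_zero, zero_add]
      have h1 : δ ≤ |z - α| := by
        by_contra hc
        rw [not_le, abs_lt] at hc
        exact hz ⟨by linarith [hc.1], by linarith [hc.2]⟩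
      rw [div_mul_eq_mul_div, le_div_iff₀ hδ]
      calc _ = |N z| * (η ^ 2 * |z - α| * δ) := by ring
        _ ≤ |N z| * (η ^ 2 * |z - α| * |z - α|) := by gcongr
        _ ≤ _ := by gcongr
  have hev : ∀ᶠ η : ℝ in nhdsWithin 0 (Set.Ioi 0), 0 < η := self_mem_nhdsWithin
  have hlim : Filter.Tendsto (fun η => ∫ z, F η z) (nhdsWithin 0 (Set.Ioi 0))
      (nhds (∫ z : ℝ, (0 : ℝ))) := by
    refine tendsto_integral_filter_of_dominated_convergence B
      (Filter.Eventually.of_forall hFm)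
      (hev.mono fun η hη => Filter.Eventually.of_forall (hbound η hη)) hBint
      (Filter.Eventually.of_forall fun z => ?_)
    by_cases hz : z - α = 0
    · simp [hF, hz]
    · have hc : ContinuousAt (fun η => F η z) 0 := by
        simp only [hF]
        refine ContinuousAt.div (by fun_prop) (by fun_prop) (by positivity)
      have h0 : F 0 z = 0 := by simp [hF]
      have := hc.tendsto
      simp only [h0] at this
      exact this.mono_left nhdsWithin_le_nhds
  rw [integral_zero] at hlim
  refine hlim.congr' (hev.mono fun η hη => ?_)
  have hFi : Integrable (F η) :=
    hBint.mono' (hFm η) (Filter.Eventually.of_forall (hbound η hη))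
  have hGi : Integrable fun z => η ^ 2 * (z - α) * h z / ((z - α) ^ 2 + η ^ 2) ^ 2 := by
    have : (fun z => η ^ 2 * (z - α) * h z / ((z - α) ^ 2 + η ^ 2) ^ 2) =
        I.indicator (fun z => η ^ 2 * (z - α) * N α / ((z - α) ^ 2 + η ^ 2) ^ 2) := by
      ext z
      by_cases hz : z ∈ I <;> simp [hh, hz]
    rw [this, integrable_indicator_iff measurableSet_Ioo]
    refine IntegrableOn.mono_set ?_ Set.Ioo_subset_Icc_self
    refine (Continuous.continuousOn ?_).integrableOn_Icc
    exact Continuous.div (by fun_prop) (by fun_prop) (fun z => by positivity)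
  have hodd := kernel_odd α δ (N α) η
  have hsum := integral_add hFi hGi
  rw [hodd, add_zero] at hsum
  rw [← hsum]
  congr 1
  ext z
  simp only [hF]
  ring
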